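/- Non-trapping consistency: for E > 0, if the trapped set is empty, K(E) = ∅, then both tails are empty: Γ_-(E) = ∅ and Γ_+(E) = ∅. -/

import Mathlib

open Filter Set
open scoped Topology RealInnerProductSpace

noncomputable section

/-- The phase space `ℝⁿ × ℝⁿ`. -/
abbrev Phase (n : ℕ) : Type := EuclideanSpace ℝ (Fin n) × EuclideanSpace ℝ (Fin n)

/-- The classical Hamiltonian `p(x, ξ) = ‖ξ‖² + V(x)`. -/
def ham {n : ℕ} (V : EuclideanSpace ℝ (Fin n) → ℝ) (ρ : Phase n) : ℝ :=
  ‖ρ.2‖ ^ 2 + V ρ.1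

/-- The Hamiltonian vector field `H_p(x, ξ) = (2ξ, -∇V(x))`. -/
def hamVF {n : ℕ} (V : EuclideanSpace ℝ (Fin n) → ℝ) (ρ : Phase n) : Phase n :=
  ((2 : ℝ) • ρ.2, -gradient V ρ.1)

/-- `Φ` is the (complete) flow of the Hamiltonian vector field `H_p`:
it starts at the identity, satisfies the group law, and each curve
`t ↦ Φ t ρ` is an integral curve of `H_p`. -/
def IsHamFlow {n : ℕ} (V : EuclideanSpace ℝ (Fin n) → ℝ)
    (Φ : ℝ → Phase n → Phase n) : Prop :=
  (∀ ρ, Φ 0 ρ = ρ) ∧ (∀ s t ρ, Φ (s + t) ρ = Φ s (Φ t ρ)) ∧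
    ∀ ρ t, HasDerivAt (fun s => Φ s ρ) (hamVF V (Φ t ρ)) t

/-- The outgoing tail `Γ₋(E)`: points of the energy surface whose forward
trajectory does not escape to infinity. -/
def GammaMinus {n : ℕ} (V : EuclideanSpace ℝ (Fin n) → ℝ)
    (Φ : ℝ → Phase n → Phase n) (E : ℝ) : Set (Phase n) :=
  {ρ | ham V ρ = E ∧ ¬ Tendsto (fun t => ‖Φ t ρ‖) atTop atTop}

/-- The incoming tail `Γ₊(E)`: points of the energy surface whose backward
trajectory does not escape to infinity. -/
def GammaPlus {n : ℕ} (V : EuclideanSpace ℝ (Fin n) → ℝ)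
    (Φ : ℝ → Phase n → Phase n) (E : ℝ) : Set (Phase n) :=
  {ρ | ham V ρ = E ∧ ¬ Tendsto (fun t => ‖Φ t ρ‖) atBot atTop}

/-- The trapped set `K(E) = Γ₋(E) ∩ Γ₊(E)`. -/
def trappedSet {n : ℕ} (V : EuclideanSpace ℝ (Fin n) → ℝ)
    (Φ : ℝ → Phase n → Phase n) (E : ℝ) : Set (Phase n) :=
  GammaMinus V Φ E ∩ GammaPlus V Φ E

/-!
Where `∇V = 0`, trajectories are straight lines. Hence a trajectory that lies beyond both
`supp ∇V` and its initial position moves outwards there (otherwise it would have come in from even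
further out), and moving outwards it escapes. So a trajectory in `Γ₋(E)` stays bounded for positive
times: its position by this dichotomy, its momentum by conservation of energy. The complete
trajectory through any `ω`-limit point is then bounded and lies in `K(E)`. Time reversal
`(t, ξ) ↦ (-t, -ξ)` exchanges `Γ₋` and `Γ₊`.
-/

section OmegaLimit

variable {τ X : Type*} [Add τ] [TopologicalSpace X] [T2Space X]

lemma exists_forall_mem_of_eventually_mem_isCompact {l : Filter τ} [NeBot l]
    (hl : ∀ s, Tendsto (s + ·) l l) {Φ : τ → X → X} (hadd : ∀ s t x, Φ (s + t) x = Φ s (Φ t x))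
    (hcont : ∀ s, Continuous (Φ s)) {S : Set X} (hS : IsCompact S) {x : X}
    (hx : ∀ᶠ t in l, Φ t x ∈ S) : ∃ a, ∀ s, Φ s a ∈ S := by
  obtain ⟨a, -, ha⟩ := hS.exists_mapClusterPt_of_frequently hx.frequently
  refine ⟨a, fun s => ?_⟩
  have hcluster : MapClusterPt (Φ s a) l (fun t => Φ s (Φ t x)) :=
    ha.continuousAt_comp (hcont s).continuousAt
  refine hS.isClosed.mem_of_mapClusterPt hcluster ?_
  simpa only [hadd] using (hl s).eventually hx

end OmegaLimit

section LipschitzVectorField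

variable {F : Type*} [NormedAddCommGroup F] [NormedSpace ℝ F] {v : F → F} {L : NNReal}
  {Φ : ℝ → F → F}

lemma dist_flow_le_of_nonneg (hv : LipschitzWith L v) (h0 : ∀ x, Φ 0 x = x)
    (hderiv : ∀ x t, HasDerivAt (fun s => Φ s x) (v (Φ t x)) t) {t : ℝ} (ht : 0 ≤ t) (x y : F) :
    dist (Φ t x) (Φ t y) ≤ Real.exp (L * t) * dist x y := by
  have hcont (z : F) : ContinuousOn (fun s => Φ s z) (Icc 0 t) :=
    fun s _ => (hderiv z s).continuousAt.continuousWithinAt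
  simpa only [sub_zero, mul_comm] using
    dist_le_of_trajectories_ODE (v := fun _ => v) (δ := dist x y) (fun _ => hv)
      (hcont x) (fun s _ => (hderiv x s).hasDerivWithinAt)
      (hcont y) (fun s _ => (hderiv y s).hasDerivWithinAt) (by rw [h0, h0]) t ⟨ht, le_rfl⟩

lemma continuous_flow_of_nonneg (hv : LipschitzWith L v) (h0 : ∀ x, Φ 0 x = x)
    (hderiv : ∀ x t, HasDerivAt (fun s => Φ s x) (v (Φ t x)) t) {t : ℝ} (ht : 0 ≤ t) :
    Continuous (Φ t) :=
  (LipschitzWith.of_dist_le_mul (K := ⟨Real.exp (L * t), (Real.exp_pos _).le⟩)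
    (dist_flow_le_of_nonneg hv h0 hderiv ht)).continuous

lemma continuous_flow (hv : LipschitzWith L v) (h0 : ∀ x, Φ 0 x = x)
    (hderiv : ∀ x t, HasDerivAt (fun s => Φ s x) (v (Φ t x)) t) (t : ℝ) : Continuous (Φ t) := by
  rcases le_total 0 t with ht | ht
  · exact continuous_flow_of_nonneg hv h0 hderiv ht
  · have hderiv_neg (x : F) (s : ℝ) :
        HasDerivAt (fun s => Φ (-s) x) ((-v) (Φ (-s) x)) s := by
      simpa using! (hderiv x (-s)).scomp s (hasDerivAt_neg s)
    simpa using continuous_flow_of_nonneg (Φ := fun s => Φ (-s)) hv.neg (by simpa using h0)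
      hderiv_neg (neg_nonneg.mpr ht)

end LipschitzVectorField

section InnerProductSpace

variable {F : Type*} [NormedAddCommGroup F] [InnerProductSpace ℝ F]

lemma norm_le_norm_add_smul_of_inner_nonneg {x ξ : F} (h : 0 ≤ ⟪x, ξ⟫) {c : ℝ} (hc : 0 ≤ c) :
    ‖x‖ ≤ ‖x + c • ξ‖ := by
  refine le_of_sq_le_sq ?_ (norm_nonneg _)
  have hinner : 0 ≤ ⟪x, c • ξ⟫ := by
    rw [inner_smul_right]
    exact mul_nonneg hc h
  rw [norm_add_sq_real]
  nlinarith [sq_nonneg ‖c • ξ‖]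

lemma tendsto_norm_add_smul_atTop (x : F) {ξ : F} (hξ : ξ ≠ 0) :
    Tendsto (fun c : ℝ => ‖x + c • ξ‖) atTop atTop := by
  have hlinear : Tendsto (fun c : ℝ => c * ‖ξ‖ - ‖x‖) atTop atTop :=
    tendsto_atTop_add_const_right _ _ (tendsto_id.atTop_mul_const (norm_pos_iff.mpr hξ))
  refine tendsto_atTop_mono' _ ?_ hlinear
  filter_upwards [eventually_ge_atTop 0] with c hc
  calc c * ‖ξ‖ - ‖x‖ = ‖c • ξ‖ - ‖x‖ := by rw [norm_smul, Real.norm_of_nonneg hc]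
    _ ≤ ‖x + c • ξ‖ := by simpa [add_comm] using norm_sub_le_norm_add (c • ξ) x

variable [CompleteSpace F] {f : F → ℝ}

lemma contDiff_gradient {m k : WithTop ℕ∞} (hf : ContDiff ℝ k f) (hmk : m + 1 ≤ k) :
    ContDiff ℝ m (gradient f) :=
  (InnerProductSpace.toDual ℝ F).symm.contDiff.comp (hf.fderiv_right hmk)

lemma hasCompactSupport_gradient (hf : HasCompactSupport f) : HasCompactSupport (gradient f) :=
  (hf.fderiv ℝ).comp_left (g := (InnerProductSpace.toDual ℝ F).symm) (map_zero _)

end InnerProductSpace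

lemma exists_forall_lt_norm_eq_zero_of_hasCompactSupport {F G : Type*} [SeminormedAddCommGroup F]
    [Zero G] {g : F → G} (hg : HasCompactSupport g) : ∃ R : ℝ, ∀ x, R < ‖x‖ → g x = 0 := by
  obtain ⟨R, hR⟩ := hg.isCompact.isBounded.exists_norm_le
  exact ⟨R, fun x hx => image_eq_zero_of_notMem_tsupport fun hmem => (hR x hmem).not_gt hx⟩

section HamiltonianFlow

variable {n : ℕ} {V : EuclideanSpace ℝ (Fin n) → ℝ} {Φ : ℝ → Phase n → Phase n} {L : NNReal}
  {R E : ℝ} {ρ : Phase n}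

lemma exists_lipschitzWith_hamVF (hV : ContDiff ℝ 2 V) (hVsupp : HasCompactSupport V) :
    ∃ L, LipschitzWith L (hamVF V) := by
  have hgrad : ContDiff ℝ 1 (gradient V) := contDiff_gradient hV one_add_one_eq_two.le
  obtain ⟨C, hC⟩ := hgrad.lipschitzWith_of_hasCompactSupport (hasCompactSupport_gradient hVsupp)
    one_ne_zero
  exact ⟨_, ((lipschitzWith_smul (2 : ℝ)).comp LipschitzWith.prod_snd).prodMk
    (hC.comp LipschitzWith.prod_fst).neg⟩

lemma continuous_ham (hV : Continuous V) : Continuous (ham V) := by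
  unfold ham
  fun_prop

lemma norm_snd_le_sqrt_ham_add {B : ℝ} (hB : -B ≤ V ρ.1) : ‖ρ.2‖ ≤ √(ham V ρ + B) := by
  apply Real.le_sqrt_of_sq_le
  unfold ham
  linarith

/-- Momentum reversal `(x, ξ) ↦ (x, -ξ)`. -/
def momentumFlip (ρ : Phase n) : Phase n := (ρ.1, -ρ.2)

@[simp]
lemma momentumFlip_momentumFlip (ρ : Phase n) : momentumFlip (momentumFlip ρ) = ρ := by
  simp [momentumFlip]

@[simp]
lemma norm_momentumFlip (ρ : Phase n) : ‖momentumFlip ρ‖ = ‖ρ‖ := by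
  simp [momentumFlip, Prod.norm_def]

@[simp]
lemma ham_momentumFlip (ρ : Phase n) : ham V (momentumFlip ρ) = ham V ρ := by
  simp [momentumFlip, ham]

/-- The flow `Φ` run backwards in time and conjugated by momentum reversal. It is again a flow of
the same Hamiltonian, so statements about positive times transfer to negative times. -/
def timeReversal (Φ : ℝ → Phase n → Phase n) (t : ℝ) (ρ : Phase n) : Phase n :=
  momentumFlip (Φ (-t) (momentumFlip ρ))

@[simp]
lemma timeReversal_timeReversal (Φ : ℝ → Phase n → Phase n) :
    timeReversal (timeReversal Φ) = Φ := by
  funext t ρ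
  simp [timeReversal]

lemma momentumFlip_mem_GammaMinus_timeReversal :
    momentumFlip ρ ∈ GammaMinus V (timeReversal Φ) E ↔ ρ ∈ GammaPlus V Φ E := by
  simp only [GammaMinus, GammaPlus, mem_ofPred_eq, ham_momentumFlip, timeReversal,
    momentumFlip_momentumFlip, norm_momentumFlip]
  rw [← tendsto_comp_neg_atTop_iff]

lemma momentumFlip_mem_GammaPlus_timeReversal :
    momentumFlip ρ ∈ GammaPlus V (timeReversal Φ) E ↔ ρ ∈ GammaMinus V Φ E := by
  rw [← momentumFlip_mem_GammaMinus_timeReversal, timeReversal_timeReversal,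
    momentumFlip_momentumFlip]

lemma momentumFlip_mem_trappedSet_timeReversal :
    momentumFlip ρ ∈ trappedSet V (timeReversal Φ) E ↔ ρ ∈ trappedSet V Φ E := by
  rw [trappedSet, trappedSet, mem_inter_iff, mem_inter_iff,
    momentumFlip_mem_GammaMinus_timeReversal, momentumFlip_mem_GammaPlus_timeReversal, and_comm]

lemma mem_trappedSet_of_forall_norm_le (hE : ham V ρ = E) {C : ℝ} (hC : ∀ t, ‖Φ t ρ‖ ≤ C) :
    ρ ∈ trappedSet V Φ E := by
  have hbdd : BddAbove (range fun t => ‖Φ t ρ‖) := ⟨C, forall_mem_range.mpr hC⟩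
  exact ⟨⟨hE, fun h => not_bddAbove_of_tendsto_atTop h hbdd⟩,
    ⟨hE, fun h => not_bddAbove_of_tendsto_atTop h hbdd⟩⟩

namespace IsHamFlow

lemma map_zero (hΦ : IsHamFlow V Φ) (ρ : Phase n) : Φ 0 ρ = ρ := hΦ.1 ρ

lemma map_add (hΦ : IsHamFlow V Φ) (s t : ℝ) (ρ : Phase n) : Φ (s + t) ρ = Φ s (Φ t ρ) :=
  hΦ.2.1 s t ρ

lemma hasDerivAt (hΦ : IsHamFlow V Φ) (ρ : Phase n) (t : ℝ) :
    HasDerivAt (fun s => Φ s ρ) (hamVF V (Φ t ρ)) t :=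
  hΦ.2.2 ρ t

lemma hasDerivAt_fst (hΦ : IsHamFlow V Φ) (ρ : Phase n) (t : ℝ) :
    HasDerivAt (fun s => (Φ s ρ).1) ((2 : ℝ) • (Φ t ρ).2) t := by
  simpa [hamVF] using (hΦ.hasDerivAt ρ t).hasFDerivAt.fst.hasDerivAt

lemma hasDerivAt_snd (hΦ : IsHamFlow V Φ) (ρ : Phase n) (t : ℝ) :
    HasDerivAt (fun s => (Φ s ρ).2) (-gradient V (Φ t ρ).1) t := by
  simpa [hamVF] using (hΦ.hasDerivAt ρ t).hasFDerivAt.snd.hasDerivAt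

lemma isHamFlow_timeReversal (hΦ : IsHamFlow V Φ) : IsHamFlow V (timeReversal Φ) := by
  refine ⟨fun ρ => ?_, fun s t ρ => ?_, fun ρ t => ?_⟩
  · simp [timeReversal, hΦ.map_zero]
  · simp only [timeReversal, momentumFlip_momentumFlip, neg_add, hΦ.map_add]
  · have hfst := (hΦ.hasDerivAt_fst (momentumFlip ρ) (-t)).scomp t (hasDerivAt_neg t)
    have hsnd := ((hΦ.hasDerivAt_snd (momentumFlip ρ) (-t)).scomp t (hasDerivAt_neg t)).neg
    refine (hfst.prodMk hsnd).congr_deriv ?_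
    simp [hamVF, timeReversal, momentumFlip]

lemma timeReversal_momentumFlip_apply (hΦ : IsHamFlow V Φ) (t : ℝ) (ρ : Phase n) :
    timeReversal Φ t (momentumFlip (Φ t ρ)) = momentumFlip ρ := by
  rw [timeReversal, momentumFlip_momentumFlip, ← hΦ.map_add, neg_add_cancel, hΦ.map_zero]

lemma ham_apply (hΦ : IsHamFlow V Φ) (hV : Differentiable ℝ V) (t : ℝ) (ρ : Phase n) :
    ham V (Φ t ρ) = ham V ρ := by
  have hderiv (s : ℝ) : HasDerivAt (fun s => ham V (Φ s ρ)) 0 s := by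
    have hkinetic := (hΦ.hasDerivAt_snd ρ s).norm_sq
    have hpotential :=
      (hV (Φ s ρ).1).hasGradientAt.hasFDerivAt.comp_hasDerivAt s (hΦ.hasDerivAt_fst ρ s)
    refine (hkinetic.add hpotential).congr_deriv ?_
    simp
  calc ham V (Φ t ρ) = ham V (Φ 0 ρ) :=
        is_const_of_deriv_eq_zero (fun s => (hderiv s).differentiableAt)
          (fun s => (hderiv s).deriv) t 0
    _ = ham V ρ := by rw [hΦ.map_zero]

lemma tendsto_norm_of_tendsto_norm_apply (hΦ : IsHamFlow V Φ) {T : ℝ}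
    (h : Tendsto (fun t => ‖Φ t (Φ T ρ)‖) atTop atTop) :
    Tendsto (fun t => ‖Φ t ρ‖) atTop atTop := by
  refine (h.comp (tendsto_atTop_add_const_right atTop (-T) tendsto_id)).congr fun t => ?_
  simp [← hΦ.map_add]

lemma apply_eq_add_smul (hΦ : IsHamFlow V Φ) (hlip : LipschitzWith L (hamVF V))
    (hray : ∀ c : ℝ, 0 ≤ c → gradient V (ρ.1 + c • ρ.2) = 0) {t : ℝ} (ht : 0 ≤ t) :
    Φ t ρ = (ρ.1 + (2 * t) • ρ.2, ρ.2) := by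
  let line (s : ℝ) : Phase n := (ρ.1 + (2 * s) • ρ.2, ρ.2)
  have hline (s : ℝ) : HasDerivAt line ((2 : ℝ) • ρ.2, 0) s :=
    ((((hasDerivAt_id s).const_mul 2).smul_const ρ.2).const_add ρ.1).prodMk
      (hasDerivAt_const s ρ.2) |>.congr_deriv (by simp)
  have hfield (s : ℝ) (hs : 0 ≤ s) : hamVF V (line s) = ((2 : ℝ) • ρ.2, 0) := by
    simp [hamVF, line, hray (2 * s) (by positivity)]
  have hunique : EqOn (fun s => Φ s ρ) line (Icc 0 t) :=
    ODE_solution_unique (v := fun _ => hamVF V) (fun _ => hlip)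
      (fun s _ => (hΦ.hasDerivAt ρ s).continuousAt.continuousWithinAt)
      (fun s _ => (hΦ.hasDerivAt ρ s).hasDerivWithinAt)
      (fun s _ => (hline s).continuousAt.continuousWithinAt)
      (fun s hs => hfield s hs.1 ▸ (hline s).hasDerivWithinAt)
      (by simp [line, hΦ.map_zero])
  exact hunique ⟨ht, le_rfl⟩

lemma apply_eq_add_smul_of_inner_nonneg (hΦ : IsHamFlow V Φ) (hlip : LipschitzWith L (hamVF V))
    (hR : ∀ x, R < ‖x‖ → gradient V x = 0) (hρ : R < ‖ρ.1‖) (hinner : 0 ≤ ⟪ρ.1, ρ.2⟫)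
    {t : ℝ} (ht : 0 ≤ t) : Φ t ρ = (ρ.1 + (2 * t) • ρ.2, ρ.2) :=
  hΦ.apply_eq_add_smul hlip
    (fun _ hc => hR _ (hρ.trans_le (norm_le_norm_add_smul_of_inner_nonneg hinner hc))) ht

lemma norm_fst_le_norm_fst_apply (hΦ : IsHamFlow V Φ) (hlip : LipschitzWith L (hamVF V))
    (hR : ∀ x, R < ‖x‖ → gradient V x = 0) (hρ : R < ‖ρ.1‖) (hinner : 0 ≤ ⟪ρ.1, ρ.2⟫)
    {t : ℝ} (ht : 0 ≤ t) : ‖ρ.1‖ ≤ ‖(Φ t ρ).1‖ := by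
  rw [hΦ.apply_eq_add_smul_of_inner_nonneg hlip hR hρ hinner ht]
  exact norm_le_norm_add_smul_of_inner_nonneg hinner (by positivity)

lemma tendsto_norm_of_inner_pos (hΦ : IsHamFlow V Φ) (hlip : LipschitzWith L (hamVF V))
    (hR : ∀ x, R < ‖x‖ → gradient V x = 0) (hρ : R < ‖ρ.1‖) (hinner : 0 < ⟪ρ.1, ρ.2⟫) :
    Tendsto (fun t => ‖Φ t ρ‖) atTop atTop := by
  have hmomentum : ρ.2 ≠ 0 := fun h => by simp [h] at hinner
  have hline : Tendsto (fun t : ℝ => ‖ρ.1 + (2 * t) • ρ.2‖) atTop atTop :=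
    (tendsto_norm_add_smul_atTop ρ.1 hmomentum).comp (tendsto_id.const_mul_atTop two_pos)
  refine tendsto_atTop_mono' _ ?_ hline
  filter_upwards [eventually_ge_atTop 0] with t ht
  rw [hΦ.apply_eq_add_smul_of_inner_nonneg hlip hR hρ hinner.le ht]
  exact norm_fst_le (ρ.1 + (2 * t) • ρ.2, ρ.2)

lemma norm_fst_apply_le_of_mem_GammaMinus (hΦ : IsHamFlow V Φ)
    (hlip : LipschitzWith L (hamVF V)) (hR : ∀ x, R < ‖x‖ → gradient V x = 0)
    (hρ : ρ ∈ GammaMinus V Φ E) {t : ℝ} (ht : 0 ≤ t) : ‖(Φ t ρ).1‖ ≤ max R ‖ρ.1‖ := by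
  by_contra! hfar
  obtain ⟨hfarR, hfarρ⟩ := max_lt_iff.mp hfar
  rcases lt_or_ge 0 ⟪(Φ t ρ).1, (Φ t ρ).2⟫ with hout | hin
  · exact hρ.2 (hΦ.tendsto_norm_of_tendsto_norm_apply
      (hΦ.tendsto_norm_of_inner_pos hlip hR hfarR hout))
  · have hpast := hΦ.isHamFlow_timeReversal.norm_fst_le_norm_fst_apply hlip hR
      (ρ := momentumFlip (Φ t ρ)) hfarR (by simpa [momentumFlip] using hin) ht
    rw [hΦ.timeReversal_momentumFlip_apply] at hpast
    exact hfarρ.not_ge hpast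

lemma exists_forall_norm_apply_le_of_mem_GammaMinus (hΦ : IsHamFlow V Φ) (hV : ContDiff ℝ 2 V)
    (hVsupp : HasCompactSupport V) (hρ : ρ ∈ GammaMinus V Φ E) :
    ∃ C, ∀ t, 0 ≤ t → ‖Φ t ρ‖ ≤ C := by
  obtain ⟨L, hlip⟩ := exists_lipschitzWith_hamVF hV hVsupp
  obtain ⟨R, hR⟩ := exists_forall_lt_norm_eq_zero_of_hasCompactSupport
    (hasCompactSupport_gradient hVsupp)
  obtain ⟨B, hB⟩ := hVsupp.exists_bound_of_continuous hV.continuous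
  refine ⟨max (max R ‖ρ.1‖) √(ham V ρ + B), fun t ht => max_le_max ?_ ?_⟩
  · exact hΦ.norm_fst_apply_le_of_mem_GammaMinus hlip hR hρ ht
  · rw [← hΦ.ham_apply (hV.differentiable two_ne_zero) t ρ]
    exact norm_snd_le_sqrt_ham_add (neg_le_of_abs_le (hB _))

lemma trappedSet_nonempty_of_mem_GammaMinus (hΦ : IsHamFlow V Φ) (hV : ContDiff ℝ 2 V)
    (hVsupp : HasCompactSupport V) (hρ : ρ ∈ GammaMinus V Φ E) :
    (trappedSet V Φ E).Nonempty := by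
  obtain ⟨L, hlip⟩ := exists_lipschitzWith_hamVF hV hVsupp
  obtain ⟨C, hC⟩ := hΦ.exists_forall_norm_apply_le_of_mem_GammaMinus hV hVsupp hρ
  have hcompact : IsCompact (Metric.closedBall 0 C ∩ ham V ⁻¹' {E}) :=
    (isCompact_closedBall 0 C).inter_right
      (isClosed_singleton.preimage (continuous_ham hV.continuous))
  have hmem : ∀ᶠ t in atTop, Φ t ρ ∈ Metric.closedBall 0 C ∩ ham V ⁻¹' {E} := by
    filter_upwards [eventually_ge_atTop 0] with t ht
    exact ⟨mem_closedBall_zero_iff.mpr (hC t ht),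
      (hΦ.ham_apply (hV.differentiable two_ne_zero) t ρ).trans hρ.1⟩
  obtain ⟨a, ha⟩ := exists_forall_mem_of_eventually_mem_isCompact
    (fun s => tendsto_atTop_add_const_left atTop s tendsto_id) hΦ.map_add
    (continuous_flow hlip hΦ.map_zero hΦ.hasDerivAt) hcompact hmem
  have haE : ham V a = E := hΦ.map_zero a ▸ (ha 0).2
  exact ⟨a, mem_trappedSet_of_forall_norm_le haE fun t => mem_closedBall_zero_iff.mp (ha t).1⟩

lemma trappedSet_nonempty_of_mem_GammaPlus (hΦ : IsHamFlow V Φ) (hV : ContDiff ℝ 2 V)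
    (hVsupp : HasCompactSupport V) (hρ : ρ ∈ GammaPlus V Φ E) :
    (trappedSet V Φ E).Nonempty := by
  obtain ⟨a, ha⟩ := hΦ.isHamFlow_timeReversal.trappedSet_nonempty_of_mem_GammaMinus hV hVsupp
    (momentumFlip_mem_GammaMinus_timeReversal.mpr hρ)
  rw [← momentumFlip_momentumFlip a, momentumFlip_mem_trappedSet_timeReversal] at ha
  exact ⟨momentumFlip a, ha⟩

end IsHamFlow

theorem nontrapping_consistency_general (hV : ContDiff ℝ 2 V) (hVsupp : HasCompactSupport V)
    (hΦ : IsHamFlow V Φ) (hK : trappedSet V Φ E = ∅) :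
    GammaMinus V Φ E = ∅ ∧ GammaPlus V Φ E = ∅ := by
  rw [← not_nonempty_iff_eq_empty] at hK
  exact ⟨eq_empty_of_forall_notMem fun _ hρ =>
      hK (hΦ.trappedSet_nonempty_of_mem_GammaMinus hV hVsupp hρ),
    eq_empty_of_forall_notMem fun _ hρ =>
      hK (hΦ.trappedSet_nonempty_of_mem_GammaPlus hV hVsupp hρ)⟩

end HamiltonianFlow

/-- Non-trapping consistency: if the trapped set is empty then both tails are
empty. -/
theorem nontrapping_consistency (n : ℕ) (hn : 1 ≤ n)
    (V : EuclideanSpace ℝ (Fin n) → ℝ) (hV : ContDiff ℝ (⊤ : ℕ∞) V)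
    (hVsupp : HasCompactSupport V)
    (Φ : ℝ → Phase n → Phase n) (hΦ : IsHamFlow V Φ)
    (E : ℝ) (hE : 0 < E) (hK : trappedSet V Φ E = ∅) :
    GammaMinus V Φ E = ∅ ∧ GammaPlus V Φ E = ∅ := by
  exact nontrapping_consistency_general (hV.of_le (WithTop.coe_le_coe.mpr le_top)) hVsupp hΦ hK
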